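/- Let α_1, α_2, α_3, β_1, β_2 be complex numbers with Re(β_1 + β_2 − α_1 − α_2 − α_3) > 0 and Re(β_2 − α_3) > 0, and such that β_1, β_2 and the lower parameters of the series on the right-hand side are not nonpositive integers and none of the Gamma factors is evaluated at a pole. Then ₃F₂(α_1,α_2,α_3; β_1,β_2; 1) = [Γ(β_2)Γ(β_1+β_2−α_1−α_2−α_3)/(Γ(β_2−α_3)Γ(β_1+β_2−α_1−α_2))]·₃F₂(β_1−α_1, β_1−α_2, α_3; β_1, β_1+β_2−α_1−α_2; 1). -/

import Mathlib

/-- The ascending Pochhammer symbol `(x)_n`. -/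
noncomputable def poch (x : ℂ) (n : ℕ) : ℂ := (ascPochhammer ℂ n).eval x

/-- The generalized hypergeometric series `₃F₂(a₁,a₂,a₃; b₁,b₂; 1)`. -/
noncomputable def F32 (a1 a2 a3 b1 b2 : ℂ) : ℂ :=
  ∑' n : ℕ, poch a1 n * poch a2 n * poch a3 n / ((n.factorial : ℂ) * poch b1 n * poch b2 n)

/-- `z` is not a nonpositive integer (i.e. `Γ` is not evaluated at a pole at `z`). -/
def NotPole (z : ℂ) : Prop := ∀ n : ℕ, z ≠ -(n : ℂ)

/-!
Write `(a, b, c; d, e)` for `(α₁, α₂, α₃; β₁, β₂)` and put `u = a + b - d`. By Euler's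
transformation the coefficients of `₂F₁(a, b; d; x)` are those of
`(1 - x) ^ (-u) * ₂F₁(d - a, d - b; d; x)`, so `₃F₂(a, b, c; d, e; 1)` becomes the double series

  `∑ k m, (d - a)_k (d - b)_k / (k! (d)_k) * (u)_m / m! * (c)_(k + m) / (e)_(k + m)`,

whose inner sums over `m` are `₂F₁(c + k, u; e + k; 1)`, evaluated by Gauss's theorem; what is left
is the series on the right side. The double series converges absolutely if `0 ≤ Re u`. The case
`Re u ≤ 0` is the same identity read backwards: the substitution
`(a, b, e) ↦ (d - a, d - b, d + e - a - b)` is an involution that changes the sign of `u` and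
exchanges the two `₃F₂` series.

Gauss's theorem itself follows from the contiguity relation between `₂F₁(a, b; c; 1)` and
`₂F₁(a, b; c + 1; 1)`, iterated up to `c + N` with `N → ∞`.
-/

open Asymptotics Filter Finset Topology
open scoped Nat

theorem tsum_prod_eq_tsum_sum_antidiagonal {A E : Type*} [AddMonoid A] [HasAntidiagonal A]
    [AddCommMonoid E] [TopologicalSpace E] [ContinuousAdd E] [T3Space E] {f : A × A → E}
    (hf : Summable f) :
    ∑' p, f p = ∑' n, ∑ p ∈ antidiagonal n, f p := by
  conv_rhs => congr; ext; rw [← Finset.sum_finset_coe, ← tsum_fintype (L := .unconditional _)]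
  rw [← HasAntidiagonal.sigmaAntidiagonalEquivProd.tsum_eq f]
  exact (HasAntidiagonal.sigmaAntidiagonalEquivProd.summable_iff.2 hf).tsum_sigma'
    fun n => (hasSum_fintype _).summable

theorem isBigO_rpow_of_tendsto_mul_cpow {f : ℕ → ℂ} {z L : ℂ}
    (h : Tendsto (fun n : ℕ => f n * (n : ℂ) ^ (-z)) atTop (𝓝 L)) :
    f =O[⊤] fun n : ℕ => ((n : ℝ) + 1) ^ z.re := by
  have f_cpow : f =O[atTop] fun n : ℕ => (n : ℂ) ^ z := by
    refine ((h.isBigO_one ℂ).mul (isBigO_refl (fun n : ℕ => (n : ℂ) ^ z) atTop)).congr' ?_ ?_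
    · filter_upwards [eventually_ne_atTop 0] with n hn
      rw [mul_assoc, ← Complex.cpow_add _ _ (Nat.cast_ne_zero.2 hn), neg_add_cancel,
        Complex.cpow_zero, mul_one]
    · simp only [one_mul, EventuallyEq.rfl]
  have cpow_rpow : (fun n : ℕ => (n : ℂ) ^ z) =O[atTop] fun n : ℕ => (n : ℝ) ^ z.re := by
    refine IsBigO.of_bound' ?_
    filter_upwards [eventually_gt_atTop 0] with n hn
    rw [Complex.norm_natCast_cpow_of_pos hn]
    exact le_abs_self _
  have succ_equiv : (fun n : ℕ => (n : ℝ)) ~[atTop] fun n : ℕ => (n : ℝ) + 1 := by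
    refine IsEquivalent.symm (IsEquivalent.refl.add_isLittleO ?_)
    exact isLittleO_const_left.2
      (Or.inr (tendsto_norm_atTop_atTop.comp tendsto_natCast_atTop_atTop))
  have rpow_succ := (succ_equiv.rpow (r := z.re) fun n => by positivity).isBigO
  have bound := f_cpow.trans (cpow_rpow.trans rpow_succ)
  exact isBigO_top.2 ((isBigO_nat_atTop_iff fun n hn => absurd hn (by positivity)).1 bound)

theorem isBigO_mul_nat_succ_rpow {f g : ℕ → ℂ} {p q : ℝ}
    (hf : f =O[⊤] fun n : ℕ => ((n : ℝ) + 1) ^ p) (hg : g =O[⊤] fun n : ℕ => ((n : ℝ) + 1) ^ q) :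
    (fun n => f n * g n) =O[⊤] fun n : ℕ => ((n : ℝ) + 1) ^ (p + q) :=
  (hf.mul hg).congr_right fun n => (Real.rpow_add (by positivity) p q).symm

theorem summable_nat_succ_rpow {p : ℝ} (hp : p < -1) :
    Summable fun n : ℕ => ((n : ℝ) + 1) ^ p := by
  simpa using (summable_nat_add_iff 1).2 (Real.summable_nat_rpow.2 hp)

theorem summable_mul_mul_comp_add {f g w : ℕ → ℂ} {p q γ δ : ℝ}
    (hf : f =O[⊤] fun n : ℕ => ((n : ℝ) + 1) ^ p) (hg : g =O[⊤] fun n : ℕ => ((n : ℝ) + 1) ^ q)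
    (hw : w =O[⊤] fun n : ℕ => ((n : ℝ) + 1) ^ (-γ + -δ))
    (hγ : 0 ≤ γ) (hδ : 0 ≤ δ) (hp : p - γ < -1) (hq : q - δ < -1) :
    Summable fun x : ℕ × ℕ => f x.1 * g x.2 * w (x.1 + x.2) := by
  have weight : (fun x : ℕ × ℕ => w (x.1 + x.2)) =O[⊤]
      fun x => ((x.1 : ℝ) + 1) ^ (-γ) * ((x.2 : ℝ) + 1) ^ (-δ) := by
    refine (hw.comp_tendsto (k := fun x : ℕ × ℕ => x.1 + x.2) tendsto_top).trans
      (isBigO_of_le _ fun x => ?_)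
    simp only [Function.comp_apply, Nat.cast_add]
    rw [Real.rpow_add (by positivity), Real.norm_of_nonneg (by positivity),
      Real.norm_of_nonneg (by positivity)]
    gcongr ?_ * ?_ <;>
      exact Real.rpow_le_rpow_of_nonpos (by positivity) (by simp) (by linarith)
  have bound := ((hf.comp_tendsto (k := Prod.fst (β := ℕ)) tendsto_top).mul
    (hg.comp_tendsto (k := Prod.snd (α := ℕ)) tendsto_top)).mul weight
  have majorant := (summable_nat_succ_rpow hp).mul_of_nonneg (summable_nat_succ_rpow hq)
    (fun _ => by positivity) (fun _ => by positivity)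
  refine summable_of_isBigO majorant ((bound.mono le_top).congr_right fun x => ?_)
  simp only [Function.comp_apply]
  rw [sub_eq_add_neg p, sub_eq_add_neg q, Real.rpow_add (by positivity),
    Real.rpow_add (by positivity)]
  ring

theorem poch_zero (x : ℂ) : poch x 0 = 1 := by simp [poch]

theorem poch_succ (x : ℂ) (n : ℕ) : poch x (n + 1) = poch x n * (x + n) :=
  ascPochhammer_succ_eval n x

theorem poch_add (x : ℂ) (k m : ℕ) : poch x (k + m) = poch x k * poch (x + k) m := by
  simp [poch, ← ascPochhammer_mul]

theorem mul_poch_add_one (x : ℂ) (n : ℕ) : x * poch (x + 1) n = poch x n * (x + n) := by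
  rw [← poch_succ, add_comm n, poch_add]
  simp [poch]

theorem norm_poch_le_norm_poch {x : ℝ} (hx : 0 ≤ x) {z : ℂ} (hz : x ≤ z.re) (n : ℕ) :
    ‖poch x n‖ ≤ ‖poch z n‖ := by
  induction n with
  | zero => simp [poch_zero]
  | succ n ih =>
    have factor : ‖(x : ℂ) + n‖ ≤ ‖z + n‖ := calc
      ‖(x : ℂ) + n‖ = x + n := by
        rw [← Complex.ofReal_natCast, ← Complex.ofReal_add, Complex.norm_real,
          Real.norm_of_nonneg (by positivity)]
      _ ≤ (z + n).re := by simpa using hz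
      _ ≤ ‖z + n‖ := Complex.re_le_norm _
    rw [poch_succ, poch_succ, norm_mul, norm_mul]
    gcongr

namespace NotPole

variable {z : ℂ}

theorem of_re_pos (hz : 0 < z.re) : NotPole z := by
  rintro n rfl
  simp at hz
  linarith [n.cast_nonneg (α := ℝ)]

theorem add_natCast_ne_zero (hz : NotPole z) (n : ℕ) : z + n ≠ 0 :=
  fun h => hz n (eq_neg_of_add_eq_zero_left h)

theorem ne_zero (hz : NotPole z) : z ≠ 0 := by simpa using hz.add_natCast_ne_zero 0

theorem add_natCast (hz : NotPole z) (n : ℕ) : NotPole (z + n) := fun m h =>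
  hz (n + m) (by push_cast; linear_combination h)

theorem poch_ne_zero (hz : NotPole z) (n : ℕ) : poch z n ≠ 0 := by
  rw [poch, Ne, ascPochhammer_eval_eq_zero_iff]
  rintro ⟨k, -, hk⟩
  exact hz k (by rw [hk, neg_neg])

theorem Gamma_add_natCast (hz : NotPole z) (n : ℕ) :
    Complex.Gamma (z + n) = poch z n * Complex.Gamma z :=
  (div_eq_iff (Complex.Gamma_ne_zero hz)).1 (Complex.Gamma_add_nat_div_Gamma_eq z hz)

end NotPole

theorem inv_GammaSeq (s : ℂ) (n : ℕ) :
    (Complex.GammaSeq s n)⁻¹ = poch s n / n ! * (n : ℂ) ^ (-s) * (s + n) := by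
  have prod_eq : ∀ m : ℕ, ∏ j ∈ range m, (s + j) = poch s m := fun m => by
    induction m with
    | zero => simp [poch_zero]
    | succ m ih => rw [prod_range_succ, ih, poch_succ]
  rw [Complex.GammaSeq, prod_eq, poch_succ, Complex.cpow_neg]
  field_simp

theorem tendsto_poch_div_factorial_mul_cpow (s : ℂ) :
    Tendsto (fun n : ℕ => poch s n / n ! * (n : ℂ) ^ (-(s - 1))) atTop
      (𝓝 (Complex.Gamma s)⁻¹) := by
  by_cases hs : NotPole s
  · have lim := ((Complex.GammaSeq_tendsto_Gamma s).inv₀ (Complex.Gamma_ne_zero hs)).mul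
      (tendsto_natCast_div_add_atTop s)
    rw [mul_one] at lim
    refine lim.congr' ?_
    filter_upwards [eventually_ne_atTop 0] with n hn
    have hsn : (n : ℂ) + s ≠ 0 := by rw [add_comm]; exact hs.add_natCast_ne_zero n
    rw [inv_GammaSeq, neg_sub, sub_eq_neg_add, Complex.cpow_add _ _ (Nat.cast_ne_zero.2 hn),
      Complex.cpow_one]
    field_simp
    ring
  · obtain ⟨m, rfl⟩ : ∃ m : ℕ, s = -m := by simpa [NotPole] using hs
    rw [Complex.Gamma_neg_nat_eq_zero, inv_zero]
    refine tendsto_const_nhds.congr' ?_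
    filter_upwards [eventually_gt_atTop m] with n hn
    rw [poch, (ascPochhammer_eval_eq_zero_iff n _).2 ⟨m, hn, (neg_neg _).symm⟩, zero_div, zero_mul]

theorem isBigO_poch_div_factorial (s : ℂ) :
    (fun n => poch s n / n !) =O[⊤] fun n : ℕ => ((n : ℝ) + 1) ^ (s - 1).re :=
  isBigO_rpow_of_tendsto_mul_cpow (tendsto_poch_div_factorial_mul_cpow s)

theorem isBigO_factorial_div_poch {s : ℂ} (hs : NotPole s) :
    (fun n => n ! / poch s n) =O[⊤] fun n : ℕ => ((n : ℝ) + 1) ^ (1 - s).re := by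
  refine isBigO_rpow_of_tendsto_mul_cpow (((tendsto_poch_div_factorial_mul_cpow s).inv₀
    (inv_ne_zero (Complex.Gamma_ne_zero hs))).congr fun n => ?_)
  rw [mul_inv, inv_div, ← Complex.cpow_neg, neg_neg, neg_sub]

theorem isBigO_poch_div_poch (c : ℂ) {e : ℂ} (he : NotPole e) :
    (fun n => poch c n / poch e n) =O[⊤] fun n : ℕ => ((n : ℝ) + 1) ^ (c - e).re := by
  convert! isBigO_mul_nat_succ_rpow (isBigO_poch_div_factorial c) (isBigO_factorial_div_poch he)
    using 2 with n n
  · rw [div_mul_div_cancel₀ (Nat.cast_ne_zero.2 n.factorial_ne_zero)]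
  · simp

section Coefficient

variable {a b c : ℂ}

theorem ordinaryHypergeometricCoefficient_eq_poch (a b c : ℂ) (n : ℕ) :
    ordinaryHypergeometricCoefficient a b c n = poch a n * poch b n / (n ! * poch c n) := by
  simp only [ordinaryHypergeometricCoefficient, poch]
  field_simp

theorem ordinaryHypergeometricCoefficient_succ (a b : ℂ) (hc : NotPole c) (n : ℕ) :
    (n + 1) * (c + n) * ordinaryHypergeometricCoefficient a b c (n + 1) =
      (a + n) * (b + n) * ordinaryHypergeometricCoefficient a b c n := by
  have hcn := hc.add_natCast_ne_zero n
  simp only [ordinaryHypergeometricCoefficient_eq_poch, poch_succ, Nat.factorial_succ]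
  push_cast
  field_simp

theorem ordinaryHypergeometricCoefficient_add_one_right (a b : ℂ) (hc : NotPole c) (n : ℕ) :
    (c + n) * ordinaryHypergeometricCoefficient a b (c + 1) n =
      c * ordinaryHypergeometricCoefficient a b c n := by
  have hc0 := hc.ne_zero
  have hcn := hc.add_natCast_ne_zero n
  have shift : poch (c + 1) n = poch c n * (c + n) / c :=
    eq_div_of_mul_eq hc0 (by rw [mul_comm, mul_poch_add_one])
  simp only [ordinaryHypergeometricCoefficient_eq_poch, shift]
  field_simp

theorem isBigO_ordinaryHypergeometricCoefficient (a b : ℂ) (hc : NotPole c) :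
    ordinaryHypergeometricCoefficient a b c =O[⊤]
      fun n : ℕ => ((n : ℝ) + 1) ^ (a + b - c - 1).re := by
  convert! isBigO_mul_nat_succ_rpow (isBigO_poch_div_factorial a) (isBigO_poch_div_poch b hc)
    using 2 with n n
  · rw [ordinaryHypergeometricCoefficient_eq_poch, div_mul_div_comm]
  · simp only [Complex.sub_re, Complex.add_re, Complex.one_re]
    ring_nf

theorem summable_ordinaryHypergeometricCoefficient (hc : NotPole c) (h : 0 < (c - a - b).re) :
    Summable (ordinaryHypergeometricCoefficient a b c) := by
  refine summable_of_isBigO (summable_nat_succ_rpow (p := (a + b - c - 1).re) ?_)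
    ((isBigO_ordinaryHypergeometricCoefficient a b hc).mono le_top)
  simp at h ⊢
  linarith

/-- Comparison of coefficients in Euler's transformation
`(1 - x) ^ (c - a - b) * ₂F₁(c - a, c - b; c; x) = ₂F₁(a, b; c; x)`. -/
theorem sum_antidiagonal_ordinaryHypergeometricCoefficient (a b : ℂ) (hc : NotPole c) (n : ℕ) :
    ∑ p ∈ antidiagonal n, ordinaryHypergeometricCoefficient (c - a) (c - b) c p.1 *
      (poch (a + b - c) p.2 / p.2 !) = ordinaryHypergeometricCoefficient a b c n := by
  set A := ordinaryHypergeometricCoefficient (c - a) (c - b) c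
  set B : ℕ → ℂ := fun m => poch (a + b - c) m / (m ! : ℂ)
  have A_succ := ordinaryHypergeometricCoefficient_succ (c - a) (c - b) hc
  have B_succ (m : ℕ) : (m + 1) * B (m + 1) = (a + b - c + m) * B m := by
    simp only [B, poch_succ, Nat.factorial_succ]
    push_cast
    field_simp
  have S_succ (n : ℕ) : (n + 1) * (c + n) * ∑ p ∈ antidiagonal (n + 1), A p.1 * B p.2 =
      (a + n) * (b + n) * ∑ p ∈ antidiagonal n, A p.1 * B p.2 := by
    have split : (n + 1) * (c + n) * ∑ p ∈ antidiagonal (n + 1), A p.1 * B p.2 =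
        ∑ p ∈ antidiagonal (n + 1), (p.1 * (c + p.1 - 1) * A p.1) * B p.2 +
        ∑ p ∈ antidiagonal (n + 1), (c + 2 * p.1 + p.2 - 1) * A p.1 * (p.2 * B p.2) := by
      rw [← sum_add_distrib, mul_sum]
      refine sum_congr rfl fun p hp => ?_
      have hn : (n : ℂ) = p.1 + p.2 - 1 :=
        eq_sub_of_add_eq (by exact_mod_cast (mem_antidiagonal.1 hp).symm)
      rw [hn]
      ring
    rw [split, Nat.sum_antidiagonal_succ, Nat.sum_antidiagonal_succ', mul_sum]
    simp only [Nat.cast_zero, zero_mul, mul_zero, zero_add, ← sum_add_distrib]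
    refine sum_congr rfl fun p hp => ?_
    rw [← mem_antidiagonal.1 hp]
    push_cast
    linear_combination B p.2 * A_succ p.1 + (c + 2 * p.1 + p.2) * A p.1 * B_succ p.2
  induction n with
  | zero => simp [A, ordinaryHypergeometricCoefficient, poch]
  | succ n ih =>
    refine mul_left_cancel₀ (mul_ne_zero n.cast_add_one_ne_zero (hc.add_natCast_ne_zero n)) ?_
    rw [S_succ, ih, ordinaryHypergeometricCoefficient_succ a b hc]

end Coefficient

section Gauss

variable {a b c : ℂ}

theorem ordinaryHypergeometric_one (a b c : ℂ) :
    ₂F₁ a b c (1 : ℂ) = ∑' n, ordinaryHypergeometricCoefficient a b c n := by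
  simp [ordinaryHypergeometric_eq_tsum]

theorem tendsto_natCast_mul_ordinaryHypergeometricCoefficient (hc : NotPole c)
    (h : 0 < (c - a - b).re) :
    Tendsto (fun n : ℕ => n * ordinaryHypergeometricCoefficient a b c n) atTop (𝓝 0) := by
  have natCast_isBigO : (fun n : ℕ => (n : ℂ)) =O[⊤] fun n : ℕ => ((n : ℝ) + 1) ^ (1 : ℝ) :=
    isBigO_of_le _ fun n => by
      rw [Complex.norm_natCast, Real.rpow_one, Real.norm_of_nonneg (by positivity)]
      exact le_add_of_nonneg_right zero_le_one
  have bound := (isBigO_mul_nat_succ_rpow natCast_isBigO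
    (isBigO_ordinaryHypergeometricCoefficient a b hc)).mono (le_top (a := atTop))
  have succ_atTop : Tendsto (fun n : ℕ => (n : ℝ) + 1) atTop atTop :=
    tendsto_atTop_add_const_right _ _ tendsto_natCast_atTop_atTop
  refine bound.trans_tendsto (((tendsto_rpow_neg_atTop h).comp succ_atTop).congr fun n => ?_)
  simp only [Function.comp_apply, Complex.sub_re, Complex.add_re, Complex.one_re]
  ring_nf

theorem ordinaryHypergeometric_one_contiguous (hc : NotPole c) (h : 0 < (c - a - b).re) :
    c * (c - a - b) * ₂F₁ a b c (1 : ℂ) = (c - a) * (c - b) * ₂F₁ a b (c + 1) (1 : ℂ) := by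
  set t := ordinaryHypergeometricCoefficient a b c
  set t' := ordinaryHypergeometricCoefficient a b (c + 1)
  have ht : Summable t := summable_ordinaryHypergeometricCoefficient hc h
  have ht' : Summable t' := by
    refine summable_ordinaryHypergeometricCoefficient (by simpa using hc.add_natCast 1) ?_
    simp at h ⊢
    linarith
  have telescope (n : ℕ) : c * (c - a - b) * t n - (c - a) * (c - b) * t' n =
      c * (n * t n) - c * ((n + 1 : ℕ) * t (n + 1)) := by
    refine mul_left_cancel₀ (hc.add_natCast_ne_zero n) ?_
    push_cast
    linear_combination c * ordinaryHypergeometricCoefficient_succ a b hc n -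
      (c - a) * (c - b) * ordinaryHypergeometricCoefficient_add_one_right a b hc n
  have partial_sums := ((ht.hasSum.mul_left (c * (c - a - b))).sub
    (ht'.hasSum.mul_left ((c - a) * (c - b)))).tendsto_sum_nat
  have boundary : Tendsto (fun n : ℕ => -c * (n * t n)) atTop (𝓝 0) := by
    simpa only [mul_zero] using
      (tendsto_natCast_mul_ordinaryHypergeometricCoefficient hc h).const_mul (-c)
  rw [ordinaryHypergeometric_one, ordinaryHypergeometric_one, ← sub_eq_zero]
  refine tendsto_nhds_unique partial_sums (boundary.congr fun N => ?_)
  simp only [telescope, sum_range_sub', Nat.cast_zero, zero_mul, mul_zero, zero_sub, neg_mul]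

theorem ordinaryHypergeometric_one_eq_mul_add_natCast (hc : NotPole c) (h : 0 < (c - a - b).re)
    (N : ℕ) :
    ₂F₁ a b c (1 : ℂ) = poch (c - a) N * poch (c - b) N / (poch c N * poch (c - a - b) N) *
      ₂F₁ a b (c + N) (1 : ℂ) := by
  induction N with
  | zero => simp [poch_zero]
  | succ N ih =>
    have hs := NotPole.of_re_pos h
    have hcN := hc.add_natCast_ne_zero N
    have hsN := hs.add_natCast_ne_zero N
    have hpc := hc.poch_ne_zero N
    have hps := hs.poch_ne_zero N
    have step := ordinaryHypergeometric_one_contiguous (a := a) (b := b) (hc.add_natCast N) (by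
      simp at h ⊢
      linarith [N.cast_nonneg (α := ℝ)])
    rw [ih, Nat.cast_succ, ← add_assoc]
    simp only [poch_succ]
    field_simp
    linear_combination poch (c - a) N * poch (c - b) N * step

theorem tendsto_ordinaryHypergeometricCoefficient_add_natCast (a b c : ℂ) (n : ℕ) :
    Tendsto (fun N : ℕ => ordinaryHypergeometricCoefficient a b (c + N) n) atTop
      (𝓝 (if n = 0 then 1 else 0)) := by
  rcases Nat.eq_zero_or_pos n with rfl | hn
  · simp [ordinaryHypergeometricCoefficient]
  have norm_atTop : Tendsto (fun N : ℕ => ‖c + N‖) atTop atTop :=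
    tendsto_atTop_mono (fun N => by simpa using Complex.re_le_norm (c + N))
      (tendsto_atTop_add_const_left _ c.re tendsto_natCast_atTop_atTop)
  have denominator := (ascPochhammer ℂ n).tendsto_norm_atTop
    (Polynomial.natDegree_pos_iff_degree_pos.1 (by rwa [ascPochhammer_natDegree])) norm_atTop
  simpa [hn.ne'] using (tendsto_inv₀_cobounded.comp
    (tendsto_norm_atTop_iff_cobounded.1 denominator)).const_mul _

theorem norm_ordinaryHypergeometricCoefficient_le (a b : ℂ) {x : ℝ} (hx : 0 < x)
    (hc : x ≤ c.re) (n : ℕ) :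
    ‖ordinaryHypergeometricCoefficient a b c n‖ ≤ ‖ordinaryHypergeometricCoefficient a b x n‖ := by
  have hpoch : 0 < ‖poch x n‖ :=
    norm_pos_iff.2 ((NotPole.of_re_pos (by simpa using hx)).poch_ne_zero n)
  simp only [ordinaryHypergeometricCoefficient_eq_poch, ← div_div, norm_div _ (poch _ n)]
  gcongr
  exact norm_poch_le_norm_poch hx.le hc n

theorem tendsto_ordinaryHypergeometric_one_add_natCast (a b c : ℂ) :
    Tendsto (fun N : ℕ => ₂F₁ a b (c + N) (1 : ℂ)) atTop (𝓝 1) := by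
  obtain ⟨x, hx⟩ := exists_gt (max 0 (a + b).re)
  obtain ⟨hx0, hxab⟩ := max_lt_iff.1 hx
  have majorant : Summable (ordinaryHypergeometricCoefficient a b x) :=
    summable_ordinaryHypergeometricCoefficient (.of_re_pos (by simpa using hx0)) (by
      simp at hxab ⊢
      linarith)
  have dominated : ∀ᶠ N : ℕ in atTop, ∀ n,
      ‖ordinaryHypergeometricCoefficient a b (c + N) n‖ ≤
        ‖ordinaryHypergeometricCoefficient a b x n‖ := by
    filter_upwards [(tendsto_atTop_add_const_left atTop c.re
      tendsto_natCast_atTop_atTop).eventually_ge_atTop x] with N hN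
    exact norm_ordinaryHypergeometricCoefficient_le a b hx0 (by simpa using hN)
  simpa [ordinaryHypergeometric_one] using tendsto_tsum_of_dominated_convergence majorant.norm
    (tendsto_ordinaryHypergeometricCoefficient_add_natCast a b c) dominated

theorem tendsto_poch_mul_poch_div (a b : ℂ) (hc : NotPole c) (hs : NotPole (c - a - b)) :
    Tendsto (fun N => poch (c - a) N * poch (c - b) N / (poch c N * poch (c - a - b) N)) atTop
      (𝓝 (Complex.Gamma c * Complex.Gamma (c - a - b) /
        (Complex.Gamma (c - a) * Complex.Gamma (c - b)))) := by
  have G := tendsto_poch_div_factorial_mul_cpow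
  have lim := ((G (c - a)).mul (G (c - b))).div ((G c).mul (G (c - a - b)))
    (mul_ne_zero (inv_ne_zero (Complex.Gamma_ne_zero hc)) (inv_ne_zero (Complex.Gamma_ne_zero hs)))
  have limit_eq : Complex.Gamma c * Complex.Gamma (c - a - b) /
      (Complex.Gamma (c - a) * Complex.Gamma (c - b)) =
      (Complex.Gamma (c - a))⁻¹ * (Complex.Gamma (c - b))⁻¹ /
        ((Complex.Gamma c)⁻¹ * (Complex.Gamma (c - a - b))⁻¹) := by
    field_simp
  rw [limit_eq]
  refine lim.congr' ?_
  filter_upwards [eventually_ne_atTop 0] with N hN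
  have hN' : (N : ℂ) ≠ 0 := Nat.cast_ne_zero.2 hN
  have hfac : (N ! : ℂ) ≠ 0 := Nat.cast_ne_zero.2 N.factorial_ne_zero
  have powers : (N : ℂ) ^ (-(c - a - 1)) * (N : ℂ) ^ (-(c - b - 1)) =
      (N : ℂ) ^ (-(c - 1)) * (N : ℂ) ^ (-(c - a - b - 1)) := by
    rw [← Complex.cpow_add _ _ hN', ← Complex.cpow_add _ _ hN']
    ring_nf
  have powers_ne : (N : ℂ) ^ (-(c - 1)) * (N : ℂ) ^ (-(c - a - b - 1)) ≠ 0 := by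
    simp [Complex.cpow_eq_zero_iff, hN']
  calc _ = poch (c - a) N * poch (c - b) N *
          ((N : ℂ) ^ (-(c - a - 1)) * (N : ℂ) ^ (-(c - b - 1))) /
        (poch c N * poch (c - a - b) N *
          ((N : ℂ) ^ (-(c - 1)) * (N : ℂ) ^ (-(c - a - b - 1)))) := by
        simp only [Pi.div_apply]
        field_simp
    _ = _ := by rw [powers, mul_div_mul_right _ _ powers_ne]

/-- If `c - a` or `c - b` is a pole of `Γ`, the right side is a junk `_ / 0 = 0`, which is the
correct value since `1 / Γ` vanishes there. -/
theorem ordinaryHypergeometric_one_eq_Gamma (hc : NotPole c) (h : 0 < (c - a - b).re) :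
    ₂F₁ a b c (1 : ℂ) = Complex.Gamma c * Complex.Gamma (c - a - b) /
      (Complex.Gamma (c - a) * Complex.Gamma (c - b)) := by
  have lim := (tendsto_poch_mul_poch_div a b hc (.of_re_pos h)).mul
    (tendsto_ordinaryHypergeometric_one_add_natCast a b c)
  rw [mul_one] at lim
  exact tendsto_nhds_unique (tendsto_const_nhds.congr
    (ordinaryHypergeometric_one_eq_mul_add_natCast hc h)) lim

end Gauss

section Transformation

variable {a b c d e : ℂ}

theorem F32_eq_tsum_ordinaryHypergeometricCoefficient (a b c d e : ℂ) :
    F32 a b c d e =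
      ∑' n, ordinaryHypergeometricCoefficient a b d n * (poch c n / poch e n) := by
  simp only [F32, ordinaryHypergeometricCoefficient_eq_poch, div_mul_div_comm]

theorem tsum_poch_div_factorial_mul_poch_add_div {u : ℂ} (he : NotPole e) (heu : NotPole (e - u))
    (h : 0 < (e - u - c).re) (k : ℕ) :
    ∑' m : ℕ, poch u m / m ! * (poch c (k + m) / poch e (k + m)) =
      Complex.Gamma e * Complex.Gamma (e - u - c) /
        (Complex.Gamma (e - c) * Complex.Gamma (e - u)) * (poch c k / poch (e - u) k) := by
  have hpe := he.poch_ne_zero k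
  have gauss := ordinaryHypergeometric_one_eq_Gamma (a := c + k) (b := u) (he.add_natCast k)
    (by simp at h ⊢; linarith)
  rw [show e + k - (c + k) - u = e - u - c by ring, show e + k - (c + k) = e - c by ring,
    show e + k - u = e - u + k by ring, he.Gamma_add_natCast, heu.Gamma_add_natCast] at gauss
  calc ∑' m : ℕ, poch u m / m ! * (poch c (k + m) / poch e (k + m))
      = ∑' m, poch c k / poch e k * ordinaryHypergeometricCoefficient (c + k) u (e + k) m :=
        tsum_congr fun m => by
          rw [ordinaryHypergeometricCoefficient_eq_poch, poch_add, poch_add]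
          field_simp
    _ = poch c k / poch e k * ₂F₁ (c + k) u (e + k) (1 : ℂ) := by
        rw [tsum_mul_left, ordinaryHypergeometric_one]
    _ = _ := by
        rw [gauss]
        field_simp

theorem summable_double_series_F32 (hd : NotPole d) (he : NotPole e)
    (h : 0 < (d + e - a - b - c).re) (hu : 0 ≤ (a + b - d).re) :
    Summable fun p : ℕ × ℕ => ordinaryHypergeometricCoefficient (d - a) (d - b) d p.1 *
      (poch (a + b - d) p.2 / p.2 !) * (poch c (p.1 + p.2) / poch e (p.1 + p.2)) := by
  -- The decay of the weight splits as `γ + δ` with `γ > -Re u` and `δ > Re u`, `u = a + b - d`.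
  have exponent : (c - e).re =
      -(((e - c).re - (a + b - d).re) / 2) + -(((e - c).re + (a + b - d).re) / 2) := by
    simp only [Complex.sub_re]
    ring
  have weight := isBigO_poch_div_poch c he
  rw [exponent] at weight
  simp only [Complex.sub_re, Complex.add_re] at h hu
  apply summable_mul_mul_comp_add (isBigO_ordinaryHypergeometricCoefficient (d - a) (d - b) hd)
    (isBigO_poch_div_factorial (a + b - d)) weight
  all_goals
    simp only [Complex.sub_re, Complex.add_re, Complex.one_re]
    linarith

theorem F32_eq_of_re_nonneg (hd : NotPole d) (he : NotPole e) (hl : NotPole (d + e - a - b))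
    (h : 0 < (d + e - a - b - c).re) (hu : 0 ≤ (a + b - d).re) :
    F32 a b c d e =
      Complex.Gamma e * Complex.Gamma (d + e - a - b - c) /
          (Complex.Gamma (e - c) * Complex.Gamma (d + e - a - b)) *
        F32 (d - a) (d - b) c d (d + e - a - b) := by
  let A := ordinaryHypergeometricCoefficient (d - a) (d - b) d
  let B (m : ℕ) : ℂ := poch (a + b - d) m / (m ! : ℂ)
  let w (n : ℕ) : ℂ := poch c n / poch e n
  have double_summable : Summable fun p : ℕ × ℕ => A p.1 * B p.2 * w (p.1 + p.2) :=
    summable_double_series_F32 hd he h hu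
  have hL : d + e - a - b = e - (a + b - d) := by ring
  rw [hL] at hl h ⊢
  calc F32 a b c d e
      = ∑' n, ∑ p ∈ antidiagonal n, A p.1 * B p.2 * w (p.1 + p.2) := by
        rw [F32_eq_tsum_ordinaryHypergeometricCoefficient]
        refine tsum_congr fun n => ?_
        rw [← sum_antidiagonal_ordinaryHypergeometricCoefficient a b hd, sum_mul]
        exact sum_congr rfl fun p hp => by rw [← mem_antidiagonal.1 hp]
    _ = ∑' k, A k * ∑' m, B m * w (k + m) := by
        rw [← tsum_prod_eq_tsum_sum_antidiagonal double_summable, double_summable.tsum_prod]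
        simp only [mul_assoc, tsum_mul_left]
    _ = _ := by
        simp only [B, w, tsum_poch_div_factorial_mul_poch_add_div he hl h,
          F32_eq_tsum_ordinaryHypergeometricCoefficient, mul_left_comm, tsum_mul_left, A]

end Transformation

theorem F32_transformation_one_term (α₁ α₂ α₃ β₁ β₂ : ℂ)
    (h₁ : 0 < (β₁ + β₂ - α₁ - α₂ - α₃).re) (h₂ : 0 < (β₂ - α₃).re)
    (hβ₁ : NotPole β₁) (hβ₂ : NotPole β₂) (hl : NotPole (β₁ + β₂ - α₁ - α₂))
    (hg₁ : NotPole (β₁ + β₂ - α₁ - α₂ - α₃)) (hg₂ : NotPole (β₂ - α₃)) :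
    F32 α₁ α₂ α₃ β₁ β₂ =
      Complex.Gamma β₂ * Complex.Gamma (β₁ + β₂ - α₁ - α₂ - α₃) /
          (Complex.Gamma (β₂ - α₃) * Complex.Gamma (β₁ + β₂ - α₁ - α₂)) *
        F32 (β₁ - α₁) (β₁ - α₂) α₃ β₁ (β₁ + β₂ - α₁ - α₂) := by
  rcases le_total 0 (α₁ + α₂ - β₁).re with hu | hu
  · exact F32_eq_of_re_nonneg hβ₁ hβ₂ hl h₁ hu
  · have hβ₂' : β₁ + (β₁ + β₂ - α₁ - α₂) - (β₁ - α₁) - (β₁ - α₂) = β₂ := by ring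
    have swapped := F32_eq_of_re_nonneg (a := β₁ - α₁) (b := β₁ - α₂) (c := α₃) hβ₁ hl
      (by rwa [hβ₂']) (by rwa [hβ₂']) (by simp at hu ⊢; linarith)
    rw [hβ₂', sub_sub_cancel, sub_sub_cancel] at swapped
    have Γβ₂ := Complex.Gamma_ne_zero hβ₂
    have Γl := Complex.Gamma_ne_zero hl
    have Γg₁ := Complex.Gamma_ne_zero hg₁
    have Γg₂ := Complex.Gamma_ne_zero hg₂
    rw [swapped]
    field_simp
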